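/- For an arbitrary canonical state w ∈ W and any formula [C]^T_X φ ∈ F(w), there is an action profile s ∈ Δ^C such that for all canonical states w', v ∈ W and each complete action profile δ ∈ Δ^𝒜, if w ∼_X w', s =_C δ, T ⊆ 𝒯_{w'}, T ⊆ 𝒯_v, and (w', δ, v) ∈ M, then φ ∈ F(v). -/

import Mathlib

/- Language: formulas over atomic propositions P, data variables V, actors 𝒜 = A.
   `bel T X φ` is B^T_X φ ; `str C T X φ` is [C]^T_X φ. -/
inductive Formula (P V A : Type) : Type
  | atom : P → Formula P V A
  | neg : Formula P V A → Formula P V A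
  | imp : Formula P V A → Formula P V A → Formula P V A
  | bel : Set V → Set V → Formula P V A → Formula P V A
  | str : Set A → Set V → Set V → Formula P V A → Formula P V A

variable {P V A : Type}

/-- Propositional tautologies: true under every valuation respecting ¬ and →. -/
def Tautology (φ : Formula P V A) : Prop :=
  ∀ v : Formula P V A → Prop,
    (∀ ψ, v (Formula.neg ψ) ↔ ¬ v ψ) →
    (∀ ψ χ, v (Formula.imp ψ χ) ↔ (v ψ → v χ)) →
    v φ

/-- Theorems of the logical system of doxastic strategies. -/
inductive Thm : Formula P V A → Prop
  | taut {φ : Formula P V A} : Tautology φ → Thm φ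
  | truth {X : Set V} {φ : Formula P V A} :
      Thm (Formula.imp (Formula.bel ∅ X φ) φ)
  | negIntro {T X : Set V} {φ : Formula P V A} :
      Thm (Formula.imp (Formula.neg (Formula.bel T X φ))
        (Formula.bel ∅ X (Formula.neg (Formula.bel T X φ))))
  | distrib {T X : Set V} {φ ψ : Formula P V A} :
      Thm (Formula.imp (Formula.bel T X (Formula.imp φ ψ))
        (Formula.imp (Formula.bel T X φ) (Formula.bel T X ψ)))
  | trust {T X Y : Set V} {φ : Formula P V A} :
      Thm (Formula.bel T X (Formula.imp (Formula.bel T Y φ) φ))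
  | monoB {T T' X X' : Set V} {φ : Formula P V A} :
      T ⊆ T' → X ⊆ X' →
      Thm (Formula.imp (Formula.bel T X φ) (Formula.bel T' X' φ))
  | monoS {C C' : Set A} {T T' X X' : Set V} {φ : Formula P V A} :
      T ⊆ T' → X ⊆ X' → C ⊆ C' →
      Thm (Formula.imp (Formula.str C T X φ) (Formula.str C' T' X' φ))
  | coop {C D : Set A} {T X : Set V} {φ ψ : Formula P V A} :
      C ∩ D = ∅ →
      Thm (Formula.imp (Formula.str C T X (Formula.imp φ ψ))
        (Formula.imp (Formula.str D T X φ) (Formula.str (C ∪ D) T X ψ)))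
  | strIntro₁ {C : Set A} {T X : Set V} {φ : Formula P V A} :
      Thm (Formula.imp (Formula.str C T X φ) (Formula.bel T X (Formula.str C T X φ)))
  | strIntro₂ {C : Set A} {T X : Set V} {φ : Formula P V A} :
      Thm (Formula.imp (Formula.bel T X (Formula.str C T X φ)) (Formula.str C T X φ))
  | unavoid {T X Y : Set V} {φ : Formula P V A} :
      Thm (Formula.imp (Formula.bel T X (Formula.str ∅ T Y φ)) (Formula.str ∅ T X φ))
  | pub {T : Set V} {φ : Formula P V A} :
      Thm (Formula.imp (Formula.bel T ∅ φ) (Formula.str ∅ T ∅ φ))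
  | mp {φ ψ : Formula P V A} : Thm (Formula.imp φ ψ) → Thm φ → Thm ψ
  | nec {φ : Formula P V A} : Thm φ → Thm (Formula.bel ∅ ∅ φ)

/-- `Deduces F φ`: φ is derivable from F together with the theorems using only Modus Ponens. -/
inductive Deduces (F : Set (Formula P V A)) : Formula P V A → Prop
  | thm {φ : Formula P V A} : Thm φ → Deduces F φ
  | mem {φ : Formula P V A} : φ ∈ F → Deduces F φ
  | mp {φ ψ : Formula P V A} :
      Deduces F (Formula.imp φ ψ) → Deduces F φ → Deduces F ψ

def Consistent (F : Set (Formula P V A)) : Prop :=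
  ¬ ∃ φ : Formula P V A, Deduces F φ ∧ Deduces F (Formula.neg φ)

def MaximalConsistent (F : Set (Formula P V A)) : Prop :=
  Consistent F ∧ ∀ G : Set (Formula P V A), Consistent G → F ⊆ G → F = G

/-- A game. -/
structure Game (P V A : Type) : Type 1 where
  W : Type
  sim : V → W → W → Prop
  sim_equiv : ∀ x : V, Equivalence (sim x)
  trust : W → Set V
  Δ : Type
  delta_nonempty : Nonempty Δ
  M : W → (A → Δ) → W → Prop
  pi : P → Set W

/-- `w ∼_X u`. -/
def Game.simSet (G : Game P V A) (X : Set V) (w u : G.W) : Prop :=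
  ∀ x ∈ X, G.sim x w u

/-- The satisfaction relation `w ⊨ φ` (as `Sat G φ w`). -/
def Sat (G : Game P V A) : Formula P V A → G.W → Prop
  | Formula.atom p, w => w ∈ G.pi p
  | Formula.neg φ, w => ¬ Sat G φ w
  | Formula.imp φ ψ, w => Sat G φ w → Sat G ψ w
  | Formula.bel T X φ, w =>
      ∀ u : G.W, G.simSet X w u → T ⊆ G.trust u → Sat G φ u
  | Formula.str C T X φ, w =>
      ∃ s : {a : A // a ∈ C} → G.Δ,
        ∀ (u v : G.W) (δ : A → G.Δ),
          G.simSet X w u → T ⊆ G.trust u →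
          (∀ (a : A) (h : a ∈ C), s ⟨a, h⟩ = δ a) →
          G.M u δ v → T ⊆ G.trust v → Sat G φ v

/- ===================== Canonical game ===================== -/

/-- One block `X_i, b_i, T_i, F_i` of a canonical state. -/
structure Block (P V A B : Type) where
  X : Set V
  b : B
  T : Set V
  F : Set (Formula P V A)

variable {B : Type}

/-- `F(w)`: the last set of formulae of the sequence (or `F0` for the root). -/
def cF (F0 : Set (Formula P V A)) (l : List (Block P V A B)) : Set (Formula P V A) :=
  l.getLast?.elim F0 Block.F

/-- `𝒯_w = T(w)`: the last dataset of the sequence (or `T0` for the root). -/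
def cTrust (T0 : Set V) (l : List (Block P V A B)) : Set V :=
  l.getLast?.elim T0 Block.T

/-- Membership of a sequence in the set of canonical states `W`. -/
inductive IsState (T0 : Set V) (F0 : Set (Formula P V A)) :
    List (Block P V A B) → Prop
  | nil :
      (∀ (Y : Set V) (ψ : Formula P V A),
        Formula.imp (Formula.bel T0 Y ψ) ψ ∈ F0) →
      IsState T0 F0 []
  | snoc {l : List (Block P V A B)} {bl : Block P V A B} :
      IsState T0 F0 l →
      MaximalConsistent bl.F →
      (∀ φ : Formula P V A, Formula.bel ∅ bl.X φ ∈ cF F0 l → φ ∈ bl.F) →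
      (∀ (Y : Set V) (ψ : Formula P V A),
        Formula.imp (Formula.bel bl.T Y ψ) ψ ∈ bl.F) →
      IsState T0 F0 (l ++ [bl])

/-- The canonical states. -/
def CState (T0 : Set V) (F0 : Set (Formula P V A)) (B : Type) : Type :=
  {l : List (Block P V A B) // IsState T0 F0 l}

attribute [local instance] Classical.propDecidable

/-- Length of the longest common prefix of two sequences. -/
noncomputable def cpl {α : Type} : List α → List α → Nat
  | a :: as, b :: bs => if a = b then cpl as bs + 1 else 0
  | _, _ => 0

/-- The blocks labelling the edges on the unique simple path between two
nodes of the canonical tree. -/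
noncomputable def pathBlocks (w u : List (Block P V A B)) : List (Block P V A B) :=
  w.drop (cpl w u) ++ u.drop (cpl w u)

/-- `w ∼_x u` in the canonical game: every edge along the unique simple path
between `w` and `u` is labelled with `x`. -/
def csimVar (x : V) (w u : List (Block P V A B)) : Prop :=
  ∀ bl ∈ pathBlocks w u, x ∈ bl.X

/-- `w ∼_X u` in the canonical game. -/
def csim (X : Set V) (w u : List (Block P V A B)) : Prop :=
  ∀ x ∈ X, csimVar x w u

/-- The canonical mechanism `M`. -/
def Mech (T0 : Set V) (F0 : Set (Formula P V A))
    (w : CState T0 F0 B) (δ : A → Formula P V A × CState T0 F0 B)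
    (v : CState T0 F0 B) : Prop :=
  ∀ (C : Set A) (T X : Set V) (φ : Formula P V A),
    Formula.str C T X φ ∈ cF F0 w.1 →
    (∀ a ∈ C, (δ a).1 = φ) →
    (∀ a ∈ C, csim X w.1 (δ a).2.1) →
    T ⊆ cTrust T0 w.1 → T ⊆ cTrust T0 v.1 →
    φ ∈ cF F0 v.1

/-- Satisfaction `w ⊨ φ` on the canonical game (as `CSat T0 F0 φ w`). -/
def CSat (T0 : Set V) (F0 : Set (Formula P V A)) :
    Formula P V A → CState T0 F0 B → Prop
  | Formula.atom p, w => Formula.atom p ∈ cF F0 w.1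
  | Formula.neg φ, w => ¬ CSat T0 F0 φ w
  | Formula.imp φ ψ, w => CSat T0 F0 φ w → CSat T0 F0 ψ w
  | Formula.bel T X φ, w =>
      ∀ u : CState T0 F0 B, csim X w.1 u.1 → T ⊆ cTrust T0 u.1 → CSat T0 F0 φ u
  | Formula.str C T X φ, w =>
      ∃ s : {a : A // a ∈ C} → Formula P V A × CState T0 F0 B,
        ∀ (u v : CState T0 F0 B) (δ : A → Formula P V A × CState T0 F0 B),
          csim X w.1 u.1 → T ⊆ cTrust T0 u.1 →
          (∀ (a : A) (h : a ∈ C), s ⟨a, h⟩ = δ a) →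
          Mech T0 F0 u δ v → T ⊆ cTrust T0 v.1 → CSat T0 F0 φ v

/- ===================== Harmony ===================== -/

/-- Conjunction definable from ¬ and →. -/
def fand (φ ψ : Formula P V A) : Formula P V A :=
  Formula.neg (Formula.imp φ (Formula.neg ψ))

/-- A canonical tautology (verum). -/
noncomputable def verum (P V A : Type) [Nonempty (Formula P V A)] : Formula P V A :=
  Formula.imp (Classical.arbitrary (Formula P V A)) (Classical.arbitrary (Formula P V A))

/-- Conjunction of a finite list of formulae. -/
noncomputable def conjList [Nonempty (Formula P V A)] :
    List (Formula P V A) → Formula P V A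
  | [] => verum P V A
  | φ :: l => fand φ (conjList l)

/-- The pair `(F, G)` is in `T`-harmony: `F ⊬ [∅]^T_V ¬⋀G'` for each finite `G' ⊆ G`. -/
def THarmony [Nonempty (Formula P V A)] (T : Set V)
    (F G : Set (Formula P V A)) : Prop :=
  ∀ l : List (Formula P V A), (∀ ψ ∈ l, ψ ∈ G) →
    ¬ Deduces F (Formula.str ∅ T (Set.univ : Set V) (Formula.neg (conjList l)))


theorem mcs_mem {F : Set (Formula P V A)} (hF : MaximalConsistent F) {φ : Formula P V A}
    (h : Deduces F φ) : φ ∈ F := by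
  have key : ∀ χ, Deduces (insert φ F) χ → Deduces F χ := by
    intro χ hχ
    induction hχ with
    | thm h => exact .thm h
    | mem h' =>
      rcases h' with rfl | h'
      · exact h
      · exact .mem h'
    | mp _ _ h1 h2 => exact .mp h1 h2
  have hc : Consistent (insert φ F) := by
    rintro ⟨χ, h1, h2⟩
    exact hF.1 ⟨χ, key _ h1, key _ h2⟩
  have := hF.2 _ hc (Set.subset_insert _ _)
  rw [this]
  exact Set.mem_insert _ _

theorem mcs_imp {F : Set (Formula P V A)} (hF : MaximalConsistent F) {φ ψ : Formula P V A}
    (ht : Thm (Formula.imp φ ψ)) (h : φ ∈ F) : ψ ∈ F :=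
  mcs_mem hF (.mp (.thm ht) (.mem h))

theorem ded_thm {F : Set (Formula P V A)} {φ χ : Formula P V A}
    (h : Deduces (insert φ F) χ) : Deduces F (Formula.imp φ χ) := by
  induction h with
  | @thm χ h =>
    exact .mp (.thm (.taut (φ := .imp χ (.imp φ χ)) (by
      intro v hn hi; simp only [hi]; tauto))) (.thm h)
  | @mem χ h' =>
    rcases h' with rfl | h'
    · exact .thm (.taut (by intro v hn hi; simp only [hi]; tauto))
    · exact .mp (.thm (.taut (φ := .imp χ (.imp φ χ)) (by
        intro v hn hi; simp only [hi]; tauto))) (.mem h')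
  | @mp α β _ _ h1 h2 =>
    exact .mp (.mp (.thm (.taut (φ := .imp (.imp φ (.imp α β)) (.imp (.imp φ α) (.imp φ β))) (by
      intro v hn hi; simp only [hi]; tauto))) h1) h2

theorem mcs_neg {F : Set (Formula P V A)} (hF : MaximalConsistent F) {φ : Formula P V A}
    (h : φ ∉ F) : Formula.neg φ ∈ F := by
  by_cases hc : Consistent (insert φ F)
  · exfalso
    apply h
    rw [hF.2 _ hc (Set.subset_insert _ _)]
    exact Set.mem_insert _ _
  · obtain ⟨χ, h1, h2⟩ := not_not.mp hc
    apply mcs_mem hF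
    exact .mp (.mp (.thm (.taut (φ := .imp (.imp φ χ) (.imp (.imp φ (.neg χ)) (.neg φ))) (by
      intro v hn hi; simp only [hi, hn]; tauto))) (ded_thm h1)) (ded_thm h2)

theorem posIntro (T X : Set V) (ψ : Formula P V A) :
    Thm (Formula.imp (.bel T X ψ) (.bel ∅ X (.bel T X ψ))) := by
  set β : Formula P V A := .bel T X ψ with hβ
  set γ : Formula P V A := .bel ∅ X (.neg β) with hγ
  have h1 : Thm (Formula.imp γ (.neg β)) := .truth
  have h2 : Thm (Formula.imp (.neg γ) (.bel ∅ X (.neg γ))) := .negIntro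
  have h3 : Thm (Formula.imp (.neg β) γ) := .negIntro
  have h4 : Thm (Formula.imp (.neg γ) β) :=
    .mp (.taut (φ := .imp (.imp (.neg β) γ) (.imp (.neg γ) β)) (by
      intro v hn hi; simp only [hi, hn]; tauto)) h3
  have h5 : Thm (Formula.bel ∅ X (.imp (.neg γ) β)) :=
    .mp (.monoB (subset_refl _) (Set.empty_subset _)) (.nec h4)
  have h6 := Thm.mp .distrib h5
  exact .mp (.mp (.mp (.taut (φ := .imp (.imp γ (.neg β)) (.imp (.imp (.neg γ) (.bel ∅ X (.neg γ)))
    (.imp (.imp (.bel ∅ X (.neg γ)) (.bel ∅ X β)) (.imp β (.bel ∅ X β))))) (by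
      intro v hn hi; simp only [hi, hn]; tauto)) h1) h2) h6

theorem cF_snoc (F0 : Set (Formula P V A)) (l : List (Block P V A B)) (bl) :
    cF F0 (l ++ [bl]) = bl.F := by simp [cF]

theorem cTrust_snoc (T0 : Set V) (l : List (Block P V A B)) (bl) :
    cTrust T0 (l ++ [bl]) = bl.T := by simp [cTrust]

theorem state_mcs {T0 : Set V} {F0 : Set (Formula P V A)} (hF0 : MaximalConsistent F0)
    {l : List (Block P V A B)} (h : IsState T0 F0 l) : MaximalConsistent (cF F0 l) := by
  cases h with
  | nil h => exact hF0
  | snoc _ h2 => rw [cF_snoc]; exact h2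

theorem state_trust {T0 : Set V} {F0 : Set (Formula P V A)}
    {l : List (Block P V A B)} (h : IsState T0 F0 l) (Y : Set V) (ψ : Formula P V A) :
    Formula.imp (.bel (cTrust T0 l) Y ψ) ψ ∈ cF F0 l := by
  cases h with
  | nil h => exact h Y ψ
  | snoc _ _ _ h2 => rw [cF_snoc, cTrust_snoc]; exact h2 Y ψ

theorem state_inv {T0 : Set V} {F0 : Set (Formula P V A)}
    {l : List (Block P V A B)} {bl} (h : IsState T0 F0 (l ++ [bl])) :
    IsState T0 F0 l ∧ ∀ φ : Formula P V A, Formula.bel ∅ bl.X φ ∈ cF F0 l → φ ∈ bl.F := by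
  generalize hm : l ++ [bl] = m at h
  cases h with
  | nil h => simp at hm
  | snoc h1 _ h3 _ =>
    obtain ⟨rfl, h⟩ := List.append_inj' hm rfl
    cases h
    exact ⟨h1, h3⟩

theorem transfer {T0 : Set V} {F0 : Set (Formula P V A)} (hF0 : MaximalConsistent F0)
    (T X : Set V) (ψ : Formula P V A) (p r : List (Block P V A B)) :
    IsState T0 F0 (p ++ r) → (∀ bl ∈ r, X ⊆ bl.X) →
    (Formula.bel T X ψ ∈ cF F0 p ↔ Formula.bel T X ψ ∈ cF F0 (p ++ r)) := by
  induction r using List.reverseRecOn with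
  | nil => simp
  | append_singleton r bl ih =>
    intro hs hX
    rw [← List.append_assoc] at hs ⊢
    have hm := state_mcs hF0 hs
    obtain ⟨hs', hb⟩ := state_inv hs
    have hm' := state_mcs hF0 hs'
    have hbX : X ⊆ bl.X := hX bl (by simp)
    rw [ih hs' (fun b hb => hX b (by simp [hb]))]
    rw [cF_snoc] at hm ⊢
    constructor
    · intro h
      exact hb _ (mcs_imp hm' (.monoB (subset_refl _) hbX) (mcs_imp hm' (posIntro T X ψ) h))
    · intro h
      by_contra hn
      have := hb _ (mcs_imp hm' (.monoB (subset_refl _) hbX)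
        (mcs_imp hm' .negIntro (mcs_neg hm' hn)))
      exact hm.1 ⟨_, .mem h, .mem this⟩

theorem cpl_comm' {α : Type} (a b : List α) : cpl a b = cpl b a := by
  induction a generalizing b with
  | nil => cases b <;> simp [cpl]
  | cons x a ih =>
    cases b with
    | nil => simp [cpl]
    | cons y b => simp only [cpl, ih b, eq_comm]

theorem cpl_take {α : Type} (a b : List α) : a.take (cpl a b) = b.take (cpl a b) := by
  induction a generalizing b with
  | nil => cases b <;> simp [cpl]
  | cons x a ih =>
    cases b with
    | nil => simp [cpl]
    | cons y b =>
      simp only [cpl]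
      split_ifs with h
      · simp [h, ih b]
      · simp

theorem csim_symm' {X : Set V} {w u : List (Block P V A B)} (h : csim X w u) : csim X u w := by
  intro x hx bl hbl
  apply h x hx bl
  simp only [pathBlocks, List.mem_append] at hbl ⊢
  rw [cpl_comm' w u]
  exact hbl.symm

theorem csim_transfer {T0 : Set V} {F0 : Set (Formula P V A)} (hF0 : MaximalConsistent F0)
    {T X : Set V} {ψ : Formula P V A} {w u : List (Block P V A B)}
    (hw : IsState T0 F0 w) (hu : IsState T0 F0 u) (h : csim X w u)
    (hB : Formula.bel T X ψ ∈ cF F0 w) : Formula.bel T X ψ ∈ cF F0 u := by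
  have e1 := List.take_append_drop (cpl w u) w
  have e2 := List.take_append_drop (cpl w u) u
  rw [← cpl_take] at e2
  have t1 := transfer hF0 T X ψ (w.take (cpl w u)) (w.drop (cpl w u)) (by rwa [e1])
    (fun bl hb x hx => h x hx bl (List.mem_append_left _ hb))
  have t2 := transfer hF0 T X ψ (w.take (cpl w u)) (u.drop (cpl w u)) (by rwa [e2])
    (fun bl hb x hx => h x hx bl (List.mem_append_right _ hb))
  rw [e1] at t1
  rw [e2] at t2
  exact t2.1 (t1.2 hB)

/-- for any canonical state w and any [C]^T_X φ ∈ F(w), there is an action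
profile s ∈ Δ^C such that for all canonical states w', v and each complete action profile δ,
if w ∼_X w', s =_C δ, T ⊆ 𝒯_{w'}, T ⊆ 𝒯_v, and (w', δ, v) ∈ M, then φ ∈ F(v). -/
theorem strategy_child_all {P V A B : Type}
    (T0 : Set V) (F0 : Set (Formula P V A))
    (hF0 : MaximalConsistent F0) (hB : Cardinal.mk A < Cardinal.mk B)
    (w : CState T0 F0 B) (C : Set A) (T X : Set V) (φ : Formula P V A)
    (h : Formula.str C T X φ ∈ cF F0 w.1) :
    ∃ s : {a : A // a ∈ C} → Formula P V A × CState T0 F0 B,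
      ∀ (w' v : CState T0 F0 B) (δ : A → Formula P V A × CState T0 F0 B),
        csim X w.1 w'.1 →
        (∀ (a : A) (ha : a ∈ C), s ⟨a, ha⟩ = δ a) →
        T ⊆ cTrust T0 w'.1 → T ⊆ cTrust T0 v.1 →
        Mech T0 F0 w' δ v →
        φ ∈ cF F0 v.1 := by
  refine ⟨fun _ => (φ, w), fun w' v δ hsim hs hT hTv hM => ?_⟩
  have hm := state_mcs hF0 w.2
  have hm' := state_mcs hF0 w'.2
  have h1 := csim_transfer hF0 w.2 w'.2 hsim (mcs_imp hm .strIntro₁ h)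
  have h2 := mcs_imp hm' (.monoB hT (subset_refl X)) h1
  have h3 : Formula.str C T X φ ∈ cF F0 w'.1 :=
    mcs_mem hm' (.mp (.mem (state_trust w'.2 X _)) (.mem h2))
  refine hM C T X φ h3 (fun a ha => ?_) (fun a ha => ?_) hT hTv
  · rw [← hs a ha]
  · rw [← hs a ha]
    exact csim_symm' hsim
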